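/- arXiv:1211.1601 — 8 statements merged into one kernel-verified Lean document; each statement's English description precedes it below -/
import Mathlib

section
/- Suppose a Gauss code G contains three pairwise disjoint pairs of cyclically consecutive points labelled, in order, (c₁, O)(c₂, O), (c₁, U)(c₃, O), and (c₂, U)(c₃, U), where ε(c₁) = ε(c₂) = ε(c₃) = +1, and let G' be obtained from G by transposing the two labels within each of these three pairs (the oriented third Reidemeister move with all three crossings positive). Then λ is unchanged on every arc outside the three pairs, W_{G'}(c) = W_G(c) for every crossing c of G, and P_{G'}(t) = P_G(t). -/
open Finset

/-- A Gauss code with `n` crossings: the `2*n` points are arranged in the cyclic order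
`0, 1, …, 2*n - 1` on `Fin (2*n)`; each pair `(c, x)` of a crossing `c : Fin n` and a
label `x : Bool` (`true` = O = over, `false` = U = under) occupies a distinct point
`pt (c, x)`, and each crossing carries a sign `±1`. -/
structure GaussCode (n : ℕ) where
  pt : Fin n × Bool → Fin (2 * n)
  inj : Function.Injective pt
  sign : Fin n → ℤ
  sign_unit : ∀ c, sign c = 1 ∨ sign c = -1

namespace GaussCode

/-- The cyclic distance from `i` forward to `j` in `Fin m`. -/
def cdist {m : ℕ} (i j : Fin m) : ℕ := (j.val + m - i.val) % m

/-- The cyclically next point after `i`. -/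
def next {m : ℕ} (i : Fin m) : Fin m := ⟨(i.val + 1) % m, Nat.mod_lt _ i.pos⟩

variable {n : ℕ}

/-- `firstO G i c` holds when the first occurrence of the crossing `c`, reading the
points cyclically forward starting from the arc immediately preceding the point `i`,
carries the label O. (Arcs are indexed by the point they immediately precede.) -/
def firstO (G : GaussCode n) (i : Fin (2 * n)) (c : Fin n) : Prop :=
  cdist i (G.pt (c, true)) < cdist i (G.pt (c, false))

instance (G : GaussCode n) (i : Fin (2 * n)) (c : Fin n) : Decidable (G.firstO i c) :=
  inferInstanceAs (Decidable (_ < _))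

/-- The Cheng coloring `λ` of the arc immediately preceding the point `i`: the sum of
`ε c` over all crossings `c` whose first occurrence, reading cyclically forward from
this arc, carries the label O. -/
def lam (G : GaussCode n) (i : Fin (2 * n)) : ℤ :=
  ∑ c : Fin n, if G.firstO i c then G.sign c else 0

/-- The writhe of a Gauss code: the sum of the signs of its crossings. -/
def wr (G : GaussCode n) : ℤ := ∑ c : Fin n, G.sign c

/-- The weight `W(c) = λ_O(c) - λ_U(c) - ε(c)` of a crossing `c`, where `λ_O(c)`
(resp. `λ_U(c)`) is `λ` of the arc immediately preceding the O (resp. U) point of `c`. -/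
def W (G : GaussCode n) (c : Fin n) : ℤ :=
  G.lam (G.pt (c, true)) - G.lam (G.pt (c, false)) - G.sign c

open LaurentPolynomial in
/-- The affine index polynomial `P_G(t) = Σ_c ε(c) (t^{W(c)} - 1) ∈ ℤ[t,t⁻¹]`. -/
noncomputable def P (G : GaussCode n) : LaurentPolynomial ℤ :=
  ∑ c : Fin n, G.sign c • (T (G.W c) - 1)

end GaussCode

namespace GaussCode

/-- The Gauss code `G'` obtained from `G` by transposing the two labels within each of
the three pairs of cyclically consecutive points labelled `(c₁, O)(c₂, O)`,
`(c₁, U)(c₃, O)` and `(c₂, U)(c₃, U)` (the oriented third Reidemeister move): the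
points, their cyclic order and the signs are unchanged, and the six labels are
permuted by the three transpositions `(c₁, O) ↔ (c₂, O)`, `(c₁, U) ↔ (c₃, O)` and
`(c₂, U) ↔ (c₃, U)`. -/
def r3swap {n : ℕ} (G : GaussCode n) (c₁ c₂ c₃ : Fin n) : GaussCode n where
  pt := fun p => G.pt ((Equiv.swap (c₁, true) (c₂, true))
      ((Equiv.swap (c₁, false) (c₃, true)) ((Equiv.swap (c₂, false) (c₃, false)) p)))
  inj := G.inj.comp ((Equiv.swap (c₁, true) (c₂, true)).injective.comp
      (((Equiv.swap (c₁, false) (c₃, true)).injective.comp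
        (Equiv.swap (c₂, false) (c₃, false)).injective)))
  sign := G.sign
  sign_unit := G.sign_unit

/-- The cyclic distance as a case distinction on the linear order. -/
theorem cdist_eq_ite {m : ℕ} (i j : Fin m) :
    cdist i j = if i.val ≤ j.val then j.val - i.val else j.val + m - i.val := by
  have hi := i.isLt
  have hj := j.isLt
  unfold cdist
  split_ifs with h
  · rw [show j.val + m - i.val = (j.val - i.val) + m by omega, Nat.add_mod_right]
    exact Nat.mod_eq_of_lt (by omega)
  · exact Nat.mod_eq_of_lt (by omega)

theorem next_val_eq_ite {m : ℕ} (i : Fin m) :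
    (next i).val = if i.val + 1 = m then 0 else i.val + 1 := by
  have hi := i.isLt
  unfold next
  split_ifs with h
  · simp [h]
  · exact Nat.mod_eq_of_lt (by omega)

theorem cdist_injective {m : ℕ} (i : Fin m) : Function.Injective (cdist i) := by
  intro j k h
  have hj := j.isLt
  have hk := k.isLt
  simp only [cdist_eq_ite] at h
  apply Fin.ext
  split_ifs at h <;> omega

theorem cdist_lt {m : ℕ} (i j : Fin m) : cdist i j < m := Nat.mod_lt _ i.pos

theorem cdist_self {m : ℕ} (i : Fin m) : cdist i i = 0 := by
  simp [cdist_eq_ite]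

theorem cdist_next_right {m : ℕ} {i j : Fin m} (h : i ≠ next j) :
    cdist i (next j) = cdist i j + 1 := by
  have hi := i.isLt
  have hj := j.isLt
  have hne : i.val ≠ (next j).val := fun e => h (Fin.ext e)
  have hn := next_val_eq_ite j
  simp only [cdist_eq_ite]
  split_ifs at hn ⊢ <;> omega

theorem cdist_next_left {m : ℕ} {i j : Fin m} (h : j ≠ i) :
    cdist (next i) j + 1 = cdist i j := by
  have hi := i.isLt
  have hj := j.isLt
  have hne : j.val ≠ i.val := fun e => h (Fin.ext e)
  have hn := next_val_eq_ite i
  simp only [cdist_eq_ite]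
  split_ifs at hn ⊢ <;> omega

theorem cdist_next_self {m : ℕ} (i : Fin m) : cdist (next i) i + 1 = m := by
  have hi := i.isLt
  have hn := next_val_eq_ite i
  simp only [cdist_eq_ite]
  split_ifs at hn ⊢ <;> omega

theorem firstO_next_iff {n : ℕ} (G : GaussCode n) {i : Fin (2 * n)} {c : Fin n}
    (hO : G.pt (c, true) ≠ i) (hU : G.pt (c, false) ≠ i) :
    G.firstO (next i) c ↔ G.firstO i c := by
  have h1 := cdist_next_left hO
  have h2 := cdist_next_left hU
  unfold firstO
  omega

theorem cdist_pt_ne {n : ℕ} (G : GaussCode n) (i : Fin (2 * n)) {p q : Fin n × Bool}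
    (h : p ≠ q) : cdist i (G.pt p) ≠ cdist i (G.pt q) :=
  fun e => h (G.inj (cdist_injective i e))

/-- The first occurrence of a crossing, read from just before one of its points, is that point. -/
theorem firstO_pt_iff {n : ℕ} (G : GaussCode n) (c : Fin n) (x : Bool) :
    G.firstO (G.pt (c, x)) c ↔ x = true := by
  have h := G.cdist_pt_ne (G.pt (c, x)) (p := (c, true)) (q := (c, false)) (by simp)
  unfold firstO
  cases x <;> simp only [cdist_self] at h ⊢
  · simp
  · simpa using Nat.pos_of_ne_zero h.symm

theorem firstO_next_pt_iff {n : ℕ} (G : GaussCode n) (c : Fin n) (x : Bool) :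
    G.firstO (next (G.pt (c, x))) c ↔ x = false := by
  have h := G.cdist_pt_ne (next (G.pt (c, x))) (p := (c, true)) (q := (c, false)) (by simp)
  have hl := cdist_next_self (G.pt (c, x))
  have hO := cdist_lt (next (G.pt (c, x))) (G.pt (c, true))
  have hU := cdist_lt (next (G.pt (c, x))) (G.pt (c, false))
  unfold firstO
  cases x <;> simp <;> omega

/-- Passing a point of the crossing `c` changes `λ` by `-ε c` at an O and by `ε c` at a U. -/
theorem lam_next_pt {n : ℕ} (G : GaussCode n) (c : Fin n) (x : Bool) :
    G.lam (next (G.pt (c, x))) = G.lam (G.pt (c, x)) + if x then -G.sign c else G.sign c := by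
  rw [← sub_eq_iff_eq_add', lam, lam, ← Finset.sum_sub_distrib, Finset.sum_eq_single c]
  · simp only [firstO_pt_iff, firstO_next_pt_iff]
    cases x <;> simp
  · intro b _ hb
    have hne : ∀ y, G.pt (b, y) ≠ G.pt (c, x) := fun y e => hb (congrArg Prod.fst (G.inj e))
    simp [G.firstO_next_iff (hne true) (hne false)]
  · simp

section Reidemeister

variable {n : ℕ} (G : GaussCode n) {c₁ c₂ c₃ : Fin n}

theorem r3swap_pt_of_ne {c : Fin n} (h1 : c ≠ c₁) (h2 : c ≠ c₂) (h3 : c ≠ c₃) (x : Bool) :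
    (G.r3swap c₁ c₂ c₃).pt (c, x) = G.pt (c, x) := by
  simp [r3swap, Equiv.swap_apply_def, h1, h2, h3]

theorem r3swap_pt_fst (h12 : c₁ ≠ c₂) (h13 : c₁ ≠ c₃) (h23 : c₂ ≠ c₃) (x : Bool) :
    (G.r3swap c₁ c₂ c₃).pt (c₁, x) = G.pt (if x then c₂ else c₃, true) := by
  cases x <;> simp [r3swap, Equiv.swap_apply_def, h12, h13, h13.symm, h23.symm]

theorem r3swap_pt_snd (h12 : c₁ ≠ c₂) (h13 : c₁ ≠ c₃) (h23 : c₂ ≠ c₃) (x : Bool) :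
    (G.r3swap c₁ c₂ c₃).pt (c₂, x) = G.pt (if x then c₁ else c₃, x) := by
  cases x <;> simp [r3swap, Equiv.swap_apply_def, h12.symm, h13.symm, h23]

theorem r3swap_pt_thd (h12 : c₁ ≠ c₂) (h13 : c₁ ≠ c₃) (h23 : c₂ ≠ c₃) (x : Bool) :
    (G.r3swap c₁ c₂ c₃).pt (c₃, x) = G.pt (if x then c₁ else c₂, false) := by
  cases x <;> simp [r3swap, Equiv.swap_apply_def, h12.symm, h13.symm, h23.symm]

/-- From an arc outside the three pairs, the move does not alter which label of a crossing
comes first. -/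
theorem firstO_r3swap_iff (h12 : c₁ ≠ c₂) (h13 : c₁ ≠ c₃) (h23 : c₂ ≠ c₃)
    (hp1 : G.pt (c₂, true) = next (G.pt (c₁, true)))
    (hp2 : G.pt (c₃, true) = next (G.pt (c₁, false)))
    (hp3 : G.pt (c₃, false) = next (G.pt (c₂, false)))
    {i : Fin (2 * n)} (hi1 : i ≠ G.pt (c₂, true)) (hi2 : i ≠ G.pt (c₃, true))
    (hi3 : i ≠ G.pt (c₃, false)) (c : Fin n) :
    (G.r3swap c₁ c₂ c₃).firstO i c ↔ G.firstO i c := by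
  have e1 := cdist_next_right (hp1 ▸ hi1)
  have e2 := cdist_next_right (hp2 ▸ hi2)
  have e3 := cdist_next_right (hp3 ▸ hi3)
  rw [← hp1] at e1
  rw [← hp2] at e2
  rw [← hp3] at e3
  have d1 := G.cdist_pt_ne i (p := (c₁, true)) (q := (c₂, false)) (by simp)
  have d2 := G.cdist_pt_ne i (p := (c₂, true)) (q := (c₂, false)) (by simp)
  unfold firstO
  by_cases hc1 : c = c₁
  · subst hc1
    simp only [G.r3swap_pt_fst h12 h13 h23, if_true, Bool.false_eq_true, if_false]
    omega
  by_cases hc2 : c = c₂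
  · subst hc2
    simp only [G.r3swap_pt_snd h12 h13 h23, if_true, Bool.false_eq_true, if_false]
    omega
  by_cases hc3 : c = c₃
  · subst hc3
    simp only [G.r3swap_pt_thd h12 h13 h23, if_true, Bool.false_eq_true, if_false]
    omega
  simp only [G.r3swap_pt_of_ne hc1 hc2 hc3]

end Reidemeister

/-- Suppose a Gauss code `G` contains three pairwise disjoint pairs of
cyclically consecutive points labelled, in order, `(c₁, O)(c₂, O)`, `(c₁, U)(c₃, O)`
and `(c₂, U)(c₃, U)`, where `ε(c₁) = ε(c₂) = ε(c₃) = +1` (the distinctness of the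
crossings `c₁, c₂, c₃` together with the injectivity of the labelling forces the three
pairs to be pairwise disjoint), and let `G'` be obtained from `G` by transposing the
two labels within each of these three pairs (the oriented third Reidemeister move with
all three crossings positive).  Then `λ` is unchanged on every arc outside the three
pairs (the arcs strictly inside the pairs being those immediately preceding the second
point of each pair), `W_{G'}(c) = W_G(c)` for every crossing `c` of `G`, and
`P_{G'}(t) = P_G(t)`. -/
theorem r3_invariance {n : ℕ} (G : GaussCode n) (c₁ c₂ c₃ : Fin n)
    (h12 : c₁ ≠ c₂) (h13 : c₁ ≠ c₃) (h23 : c₂ ≠ c₃)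
    (hp1 : G.pt (c₂, true) = next (G.pt (c₁, true)))
    (hp2 : G.pt (c₃, true) = next (G.pt (c₁, false)))
    (hp3 : G.pt (c₃, false) = next (G.pt (c₂, false)))
    (hs1 : G.sign c₁ = 1) (hs2 : G.sign c₂ = 1) (hs3 : G.sign c₃ = 1) :
    (∀ i : Fin (2 * n), i ≠ G.pt (c₂, true) → i ≠ G.pt (c₃, true) →
      i ≠ G.pt (c₃, false) → (G.r3swap c₁ c₂ c₃).lam i = G.lam i) ∧
    (∀ c : Fin n, (G.r3swap c₁ c₂ c₃).W c = G.W c) ∧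
    (G.r3swap c₁ c₂ c₃).P = G.P := by
  have hlam : ∀ i : Fin (2 * n), i ≠ G.pt (c₂, true) → i ≠ G.pt (c₃, true) →
      i ≠ G.pt (c₃, false) → (G.r3swap c₁ c₂ c₃).lam i = G.lam i := by
    intro i hi1 hi2 hi3
    simp only [lam, G.firstO_r3swap_iff h12 h13 h23 hp1 hp2 hp3 hi1 hi2 hi3]
    rfl
  have hpt : ∀ p : Fin n × Bool, p ≠ (c₂, true) → p ≠ (c₃, true) → p ≠ (c₃, false) →
      (G.r3swap c₁ c₂ c₃).lam (G.pt p) = G.lam (G.pt p) := fun p h1 h2 h3 =>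
    hlam _ (G.inj.ne h1) (G.inj.ne h2) (G.inj.ne h3)
  have hW : ∀ c : Fin n, (G.r3swap c₁ c₂ c₃).W c = G.W c := by
    intro c
    have sign_eq : ∀ c, (G.r3swap c₁ c₂ c₃).sign c = G.sign c := fun _ => rfl
    have l1 := hpt (c₁, true) (by simp [h12]) (by simp [h13]) (by simp)
    have l2 := hpt (c₁, false) (by simp) (by simp) (by simp [h13])
    have l3 := hpt (c₂, false) (by simp) (by simp) (by simp [h23])
    have g1 := G.lam_next_pt c₁ true
    have g2 := G.lam_next_pt c₁ false
    have g3 := G.lam_next_pt c₂ false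
    have s1 := (G.r3swap c₁ c₂ c₃).lam_next_pt c₂ true
    have s2 := (G.r3swap c₁ c₂ c₃).lam_next_pt c₃ true
    have s3 := (G.r3swap c₁ c₂ c₃).lam_next_pt c₃ false
    simp only [G.r3swap_pt_snd h12 h13 h23, G.r3swap_pt_thd h12 h13 h23, sign_eq, if_true,
      Bool.false_eq_true, if_false, ← hp1, ← hp2, ← hp3, hs1, hs2, hs3] at g1 g2 g3 s1 s2 s3
    unfold W
    by_cases hc1 : c = c₁
    · subst hc1
      simp only [G.r3swap_pt_fst h12 h13 h23, sign_eq, if_true, Bool.false_eq_true, if_false]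
      omega
    by_cases hc2 : c = c₂
    · subst hc2
      simp only [G.r3swap_pt_snd h12 h13 h23, sign_eq, if_true, Bool.false_eq_true, if_false]
      omega
    by_cases hc3 : c = c₃
    · subst hc3
      simp only [G.r3swap_pt_thd h12 h13 h23, sign_eq, if_true, Bool.false_eq_true, if_false]
      omega
    simp only [G.r3swap_pt_of_ne hc1 hc2 hc3, sign_eq]
    rw [hpt (c, true) (by simp [hc2]) (by simp [hc3]) (by simp),
      hpt (c, false) (by simp) (by simp) (by simp [hc3])]
  refine ⟨hlam, hW, ?_⟩
  simp only [P, hW]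
  rfl

end GaussCode
end

section
/- For every Gauss code G and every crossing c, the weight of c computed in the reverse code satisfies W_Ḡ(c) = − W_G(c). -/
open Finset

namespace GaussCode

/-- The reverse `Ḡ` of a Gauss code `G`: the same points, labels and signs, but with
the reversed cyclic order.  The point at position `v` of `G` sits at position
`2*n - 1 - v` of `Ḡ`, so that the traversal order of `Ḡ` is the reverse of that of `G`.
It encodes the knot with reversed orientation; crossing signs are unchanged. -/
def rev {n : ℕ} (G : GaussCode n) : GaussCode n where
  pt := fun p => ⟨2 * n - 1 - (G.pt p).val, by have := (G.pt p).isLt; omega⟩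
  inj := by
    intro p q h
    apply G.inj
    have h1 := (G.pt p).isLt
    have h2 := (G.pt q).isLt
    rw [Fin.ext_iff] at h ⊢
    simp only at h
    omega
  sign := G.sign
  sign_unit := G.sign_unit

/-- The arc of the reverse code corresponding to a given arc: the arc of `G` between
the points at positions `i - 1` and `i` (the arc indexed by `i`) is, in `Ḡ`, the arc
between the points at positions `2*n - 1 - i` and `(2*n - i) % (2*n)`, hence is
indexed by `(2*n - i) % (2*n)`. -/
def revArc {m : ℕ} (i : Fin m) : Fin m := ⟨(m - i.val) % m, Nat.mod_lt _ i.pos⟩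

end GaussCode

namespace GaussCode

/-- Reversal exchanges the two arguments of the cyclic distance. -/
theorem cdist_rev_pt {n : ℕ} (G : GaussCode n) (p q : Fin n × Bool) :
    cdist (G.rev.pt p) (G.rev.pt q) = cdist (G.pt q) (G.pt p) := by
  have hp := (G.pt p).isLt
  have hq := (G.pt q).isLt
  simp only [cdist_eq_ite, rev]
  split_ifs <;> omega

theorem pt_val_ne {n : ℕ} (G : GaussCode n) {p q : Fin n × Bool} (h : p ≠ q) :
    (G.pt p).val ≠ (G.pt q).val :=
  fun e => h (G.inj (Fin.ext e))

/-- Starting from a point of another crossing, the first occurrence of `d` in the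
reverse code is its last occurrence in the original one. -/
theorem firstO_rev_iff_of_ne {n : ℕ} (G : GaussCode n) {c d : Fin n} (h : d ≠ c) (x : Bool) :
    G.rev.firstO (G.rev.pt (c, x)) d ↔ ¬ G.firstO (G.pt (c, x)) d := by
  have hO := G.pt_val_ne (p := (d, true)) (q := (c, x)) (by simp [h])
  have hU := G.pt_val_ne (p := (d, false)) (q := (c, x)) (by simp [h])
  have hOU := G.pt_val_ne (p := (d, true)) (q := (d, false)) (by simp)
  have h₁ := (G.pt (c, x)).isLt
  have h₂ := (G.pt (d, true)).isLt
  have h₃ := (G.pt (d, false)).isLt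
  simp only [firstO, cdist_rev_pt]
  simp only [cdist_eq_ite]
  split_ifs <;> omega

theorem firstO_pt_true {n : ℕ} (G : GaussCode n) (c : Fin n) :
    G.firstO (G.pt (c, true)) c := by
  have hOU := G.pt_val_ne (p := (c, true)) (q := (c, false)) (by simp)
  have h₁ := (G.pt (c, true)).isLt
  simp only [firstO, cdist_eq_ite]
  split_ifs <;> omega

theorem not_firstO_pt_false {n : ℕ} (G : GaussCode n) (c : Fin n) :
    ¬ G.firstO (G.pt (c, false)) c := by
  simp [firstO, cdist_eq_ite (G.pt (c, false)) (G.pt (c, false))]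

/-- The contribution of the crossing `c` itself to `W c` cancels against `sign c`. -/
theorem W_eq_sum_ne {n : ℕ} (G : GaussCode n) (c : Fin n) :
    G.W c = ∑ d ∈ univ.erase c,
      ((if G.firstO (G.pt (c, true)) d then G.sign d else 0) -
        (if G.firstO (G.pt (c, false)) d then G.sign d else 0)) := by
  rw [W, lam, lam, ← sum_sub_distrib, ← add_sum_erase _ _ (mem_univ c),
    if_pos (G.firstO_pt_true c), if_neg (G.not_firstO_pt_false c)]
  ring

/-- For every Gauss code `G` and every crossing `c`, the weight of `c`
computed in the reverse code `Ḡ` satisfies `W_Ḡ(c) = - W_G(c)`. -/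
theorem W_rev {n : ℕ} (G : GaussCode n) (c : Fin n) : G.rev.W c = - G.W c := by
  rw [W_eq_sum_ne, W_eq_sum_ne, ← sum_neg_distrib]
  refine sum_congr rfl fun d hd => ?_
  have hne := ne_of_mem_erase hd
  have hs : G.rev.sign d = G.sign d := rfl
  simp only [G.firstO_rev_iff_of_ne hne, hs]
  split_ifs <;> simp_all

end GaussCode
end

section
/- For every Gauss code G, the signed sum of the weights of all crossings vanishes: Σ_c ε(c) W(c) = 0. (Equivalently, the first Vassiliev coefficient v₁ = Σ_c sgn(c) W_K(c) of the Affine Index Polynomial is zero for every virtual knot K.) -/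
open Finset

namespace GaussCode

/-- For two chords `(a, b)` and `(a', b')` with distinct endpoints, the crossing indicators
of either chord with respect to the other are opposite. -/
theorem cdist_indicator_antisymm {m : ℕ} {a b a' b' : Fin m} (haa : a ≠ a') (hab : a ≠ b')
    (hba : b ≠ a') (hbb : b ≠ b') :
    ((if cdist a a' < cdist a b' then 1 else 0) - (if cdist b a' < cdist b b' then 1 else 0) : ℤ)
      = -((if cdist a' a < cdist a' b then 1 else 0)
        - (if cdist b' a < cdist b' b then 1 else 0)) := by
  have := a.isLt
  have := b.isLt
  have := a'.isLt
  have := b'.isLt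
  rw [Ne, Fin.ext_iff] at haa hab hba hbb
  simp only [cdist_eq_ite]
  grind

/-- The coefficient of `ε d` in the weight of the crossing `c`. -/
def weightCoeff {n : ℕ} (G : GaussCode n) (c d : Fin n) : ℤ :=
  (if G.firstO (G.pt (c, true)) d then 1 else 0)
    - (if G.firstO (G.pt (c, false)) d then 1 else 0) - (if c = d then 1 else 0)

theorem weightCoeff_self {n : ℕ} (G : GaussCode n) (c : Fin n) : G.weightCoeff c c = 0 := by
  have h : (G.pt (c, true)).val ≠ (G.pt (c, false)).val := fun h => by
    simpa using G.inj (Fin.ext h)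
  have := (G.pt (c, true)).isLt
  have := (G.pt (c, false)).isLt
  simp only [weightCoeff, firstO, cdist_eq_ite]
  grind

theorem weightCoeff_antisymm {n : ℕ} (G : GaussCode n) (c d : Fin n) :
    G.weightCoeff c d = -G.weightCoeff d c := by
  rcases eq_or_ne c d with rfl | h
  · simp [weightCoeff_self]
  · have hpt (x y : Bool) : G.pt (c, x) ≠ G.pt (d, y) := fun e =>
      h (congrArg Prod.fst (G.inj e))
    rw [weightCoeff, weightCoeff, if_neg h, if_neg h.symm, sub_zero, sub_zero]
    exact cdist_indicator_antisymm (hpt true true) (hpt true false) (hpt false true)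
      (hpt false false)

theorem W_eq_sum_weightCoeff {n : ℕ} (G : GaussCode n) (c : Fin n) :
    G.W c = ∑ d : Fin n, G.weightCoeff c d * G.sign d := by
  simp [W, lam, weightCoeff, sub_mul, Finset.sum_sub_distrib]

/-- For every Gauss code `G`, the signed sum of the weights of all
crossings vanishes: `Σ_c ε(c) W(c) = 0`.  Equivalently, the first Vassiliev
coefficient `v₁ = Σ_c sgn(c) W_K(c)` of the Affine Index Polynomial is zero for every
virtual knot `K`. -/
theorem signed_weight_sum_eq_zero {n : ℕ} (G : GaussCode n) :
    ∑ c : Fin n, G.sign c * G.W c = 0 := by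
  simp only [W_eq_sum_weightCoeff, Finset.mul_sum]
  refine self_eq_neg.mp ?_
  conv_lhs => rw [Finset.sum_comm]
  simp only [← Finset.sum_neg_distrib]
  refine Finset.sum_congr rfl fun c _ => Finset.sum_congr rfl fun d _ => ?_
  rw [G.weightCoeff_antisymm d c]
  ring

end GaussCode
end

section
/- Let R be a commutative ring with unit, let S be an R-module, let α be an invertible element of R, and let k ∈ S. Then the binary operations on S defined by a*b := αa + k and a#b := α⁻¹a − α⁻¹k (each depending only on the first argument) make S into a flat biquandle, i.e., axioms (1), (2) and (3) all hold. When α = 1 this flat biquandle (a*b = a + 1-type structure on ℤ, up to the choice of k) is the root structure underlying the Affine Index Polynomial. -/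
/-- A *flat biquandle* is a set `S` with two binary operations `(a, b) ↦ a * b`
(written `star`) and `(a, b) ↦ a # b` (written `sharp`) satisfying:
(1) for each `a ∈ S` there is a unique `x ∈ S` with `a # x = x` and `x * a = a`, and
a unique `y ∈ S` with `a * y = y` and `y # a = a`;
(2) for all `a, b ∈ S`, `(a # b) * (b * a) = a` and `(b * a) # (a # b) = b`, and for
all `a, b ∈ S` there exist unique `x, y ∈ S` with `x = b # y`, `y = a # x`,
`b = x * a` and `a = y * b`;
(3) for all `a, b, c ∈ S`, `(a # b) # c = (a # (c * b)) # (b # c)`,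
`(c * b) * a = (c * (a # b)) * (b * a)` and
`(b # c) * (a # (c * b)) = (b * a) # (c * (a # b))`. -/
def IsFlatBiquandle {S : Type*} (star sharp : S → S → S) : Prop :=
  (∀ a, ∃! x, sharp a x = x ∧ star x a = a) ∧
  (∀ a, ∃! y, star a y = y ∧ sharp y a = a) ∧
  (∀ a b, star (sharp a b) (star b a) = a ∧ sharp (star b a) (sharp a b) = b) ∧
  (∀ a b, ∃! p : S × S,
    p.1 = sharp b p.2 ∧ p.2 = sharp a p.1 ∧ b = star p.1 a ∧ a = star p.2 b) ∧
  (∀ a b c,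
    sharp (sharp a b) c = sharp (sharp a (star c b)) (sharp b c) ∧
    star (star c b) a = star (star c (sharp a b)) (star b a) ∧
    star (sharp b c) (sharp a (star c b)) = sharp (star b a) (star c (sharp a b)))

/-- A pair of mutually inverse maps, each ignoring the second argument, is a flat biquandle. -/
theorem isFlatBiquandle_of_inverse {S : Type*} {f g : S → S}
    (hfg : Function.RightInverse g f) (hgf : Function.LeftInverse g f) :
    IsFlatBiquandle (fun a _ => f a) (fun a _ => g a) := by
  refine ⟨fun a => ⟨g a, ⟨rfl, hfg a⟩, fun x hx => hx.1.symm⟩,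
    fun a => ⟨f a, ⟨rfl, hgf a⟩, fun y hy => hy.1.symm⟩,
    fun a b => ⟨hfg a, hgf b⟩,
    fun a b => ⟨(g b, g a), ⟨rfl, rfl, (hfg b).symm, (hfg a).symm⟩,
      fun p hp => Prod.ext hp.1 hp.2.1⟩,
    fun a b c => ⟨rfl, rfl, (hfg b).trans (hgf b).symm⟩⟩

/-- Let `R` be a commutative ring with unit, let `S` be an
`R`-module, let `α` be an invertible element of `R`, and let `k ∈ S`.  Then the binary
operations on `S` defined by `a * b := α a + k` and `a # b := α⁻¹ a - α⁻¹ k` (each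
depending only on the first argument) make `S` into a flat biquandle, i.e. axioms
(1), (2) and (3) all hold.  (When `α = 1` this flat biquandle is the root structure
underlying the Affine Index Polynomial.) -/
theorem isFlatBiquandle_affine {R : Type*} [CommRing R] {S : Type*} [AddCommGroup S]
    [Module R S] (α : Rˣ) (k : S) :
    IsFlatBiquandle (fun a _ : S => (α : R) • a + k)
      (fun a _ : S => ((α⁻¹ : Rˣ) : R) • a - ((α⁻¹ : Rˣ) : R) • k) := by
  refine isFlatBiquandle_of_inverse (fun a => ?_) (fun a => ?_)
  · simp [smul_sub, smul_smul]
  · simp [smul_add, smul_smul]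
end

section
/- Let R be a commutative ring with unit and let r, s, p, q, k, l ∈ R with 1 − q invertible. Define binary operations on R by a*b := ra + sb + k and a#b := pa + qb + l. Then the following are equivalent: (i) for every a ∈ R there exists x ∈ R with a#x = x and x*a = a; (ii) rp + (1−q)s − (1−q) = 0 and rl + k(1−q) = 0. Moreover, when these hold, for each a ∈ R the element x is unique and equals (1−q)⁻¹(pa + l). -/
/-- Let `R` be a commutative ring with unit and let
`r, s, p, q, k, l ∈ R` with `1 - q` invertible, say with inverse `v`.  Define binary
operations on `R` by `a * b := r a + s b + k` and `a # b := p a + q b + l`.  Then the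
following are equivalent: (i) for every `a ∈ R` there exists `x ∈ R` with `a # x = x`
and `x * a = a`; (ii) `r p + (1 - q) s - (1 - q) = 0` and `r l + k (1 - q) = 0`.
Moreover, when these hold, for each `a ∈ R` the element `x` is unique and equals
`(1 - q)⁻¹ (p a + l) = v (p a + l)`. -/
theorem affine_first_move_iff {R : Type*} [CommRing R] (r s p q k l v : R)
    (hv : (1 - q) * v = 1) :
    ((∀ a : R, ∃ x : R, p * a + q * x + l = x ∧ r * x + s * a + k = a) ↔
      (r * p + (1 - q) * s - (1 - q) = 0 ∧ r * l + k * (1 - q) = 0)) ∧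
    ((r * p + (1 - q) * s - (1 - q) = 0 ∧ r * l + k * (1 - q) = 0) →
      ∀ a x : R, (p * a + q * x + l = x ∧ r * x + s * a + k = a) ↔
        x = v * (p * a + l)) := by
  have solution_iff : (r * p + (1 - q) * s - (1 - q) = 0 ∧ r * l + k * (1 - q) = 0) →
      ∀ a x : R, (p * a + q * x + l = x ∧ r * x + s * a + k = a) ↔
        x = v * (p * a + l) := by
    rintro ⟨hA, hB⟩ a x
    constructor
    · rintro ⟨h, -⟩
      linear_combination -v * h - x * hv
    · rintro rfl
      constructor
      · linear_combination -(p * a + l) * hv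
      · linear_combination v * a * hA + v * hB - (s * a - a + k) * hv
  refine ⟨⟨fun h => ?_, fun h a => ⟨_, (solution_iff h a _).2 rfl⟩⟩, solution_iff⟩
  obtain ⟨x, hx, hx'⟩ := h 0
  obtain ⟨y, hy, hy'⟩ := h 1
  have hB : r * l + k * (1 - q) = 0 := by
    linear_combination r * hx + (1 - q) * hx'
  exact ⟨by linear_combination r * hy + (1 - q) * hy' - hB, hB⟩
end

section
/- Let R be a commutative ring with unit and let r, s, p, q, k, l ∈ R. Define binary operations on R by a*b := ra + sb + k and a#b := pa + qb + l. If the identities (a#b)*(b*a) = a and (b*a)#(a#b) = b hold for all a, b ∈ R, then pr + q² = 1, p(s+q) = 0, pk + ql + l = 0, pr + s² = 1, r(s+q) = 0, and rl + sk + k = 0. If moreover R has no zero divisors, then either s + q = 0, or p = r = 0. -/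
/-- Let `R` be a commutative ring with unit and let
`r, s, p, q, k, l ∈ R`.  Define binary operations on `R` by `a * b := r a + s b + k`
and `a # b := p a + q b + l`.  If the identities `(a # b) * (b * a) = a` and
`(b * a) # (a # b) = b` hold for all `a, b ∈ R` (the direct second flat Reidemeister
move), then `p r + q² = 1`, `p (s + q) = 0`, `p k + q l + l = 0`, `p r + s² = 1`,
`r (s + q) = 0` and `r l + s k + k = 0`.  If moreover `R` has no zero divisors, then
either `s + q = 0`, or `p = 0` and `r = 0`. -/
theorem affine_second_move_conditions {R : Type*} [CommRing R] (r s p q k l : R)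
    (star : R → R → R) (sharp : R → R → R)
    (hstar : ∀ a b : R, star a b = r * a + s * b + k)
    (hsharp : ∀ a b : R, sharp a b = p * a + q * b + l)
    (H : ∀ a b : R, star (sharp a b) (star b a) = a ∧ sharp (star b a) (sharp a b) = b) :
    (p * r + q ^ 2 = 1 ∧ p * (s + q) = 0 ∧ p * k + q * l + l = 0 ∧
      p * r + s ^ 2 = 1 ∧ r * (s + q) = 0 ∧ r * l + s * k + k = 0) ∧
    ((∀ x y : R, x * y = 0 → x = 0 ∨ y = 0) →
      (s + q = 0 ∨ (p = 0 ∧ r = 0))) := by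
  simp only [hstar, hsharp] at H
  obtain ⟨h₀, g₀⟩ := H 0 0
  obtain ⟨h₁, g₁⟩ := H 1 0
  obtain ⟨h₂, g₂⟩ := H 0 1
  have hp : p * (s + q) = 0 := by linear_combination g₁ - g₀
  have hr : r * (s + q) = 0 := by linear_combination h₂ - h₀
  refine ⟨⟨?_, hp, ?_, ?_, hr, ?_⟩, fun hR => ?_⟩
  · linear_combination g₂ - g₀
  · linear_combination g₀
  · linear_combination h₁ - h₀
  · linear_combination h₀
  · rcases hR _ _ hp with hp0 | hsq
    · rcases hR _ _ hr with hr0 | hsq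
      · exact Or.inr ⟨hp0, hr0⟩
      · exact Or.inl hsq
    · exact Or.inl hsq
end

section
/- Let R be a commutative ring with unit, let q, p, r ∈ R and k, l ∈ R, and assume r is invertible. Define binary operations on R by a*b := ra − qb + k and a#b := pa + qb + l. Then the following are equivalent: (i) for all a, b ∈ R there exist x, y ∈ R with x = b#y, y = a#x, b = x*a, and a = y*b; (ii) rp + q² = 1 and rl + (1−q)k = 0. Moreover, when these hold, x and y are unique, namely x = r⁻¹(qa + b − k) and y = r⁻¹(qb + a − k). -/
/-- Let `R` be a commutative ring with unit, let
`q, p, r, k, l ∈ R`, and assume `r` is invertible, say with inverse `v`.  Define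
binary operations on `R` by `a * b := r a - q b + k` and `a # b := p a + q b + l`.
Then the following are equivalent: (i) for all `a, b ∈ R` there exist `x, y ∈ R` with
`x = b # y`, `y = a # x`, `b = x * a` and `a = y * b` (the reverse-oriented second
flat Reidemeister move); (ii) `r p + q² = 1` and `r l + (1 - q) k = 0`.  Moreover,
when these hold, `x` and `y` are unique, namely `x = r⁻¹ (q a + b - k) = v (q a + b - k)`
and `y = r⁻¹ (q b + a - k) = v (q b + a - k)`. -/
theorem affine_reverse_second_move_iff {R : Type*} [CommRing R] (q p r k l v : R)
    (hv : r * v = 1) (star sharp : R → R → R)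
    (hstar : ∀ a b : R, star a b = r * a - q * b + k)
    (hsharp : ∀ a b : R, sharp a b = p * a + q * b + l) :
    ((∀ a b : R, ∃ x y : R,
        x = sharp b y ∧ y = sharp a x ∧ b = star x a ∧ a = star y b) ↔
      (r * p + q ^ 2 = 1 ∧ r * l + (1 - q) * k = 0)) ∧
    ((r * p + q ^ 2 = 1 ∧ r * l + (1 - q) * k = 0) →
      ∀ a b x y : R,
        (x = sharp b y ∧ y = sharp a x ∧ b = star x a ∧ a = star y b) ↔
          (x = v * (q * a + b - k) ∧ y = v * (q * b + a - k))) := by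
  have solution : (r * p + q ^ 2 = 1 ∧ r * l + (1 - q) * k = 0) →
      ∀ a b x y : R,
        (x = sharp b y ∧ y = sharp a x ∧ b = star x a ∧ a = star y b) ↔
          (x = v * (q * a + b - k) ∧ y = v * (q * b + a - k)) := by
    rintro ⟨h₁, h₂⟩ a b x y
    simp only [hstar, hsharp]
    constructor
    · rintro ⟨-, -, hb, ha⟩
      constructor
      · linear_combination -x * hv - v * hb
      · linear_combination -y * hv - v * ha
    · rintro ⟨rfl, rfl⟩
      refine ⟨?_, ?_, ?_, ?_⟩
      · linear_combination -v * b * h₁ - v * h₂ + (p * b + l) * hv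
      · linear_combination -v * a * h₁ - v * h₂ + (p * a + l) * hv
      · linear_combination -(q * a + b - k) * hv
      · linear_combination -(q * b + a - k) * hv
  refine ⟨⟨fun h => ?_, fun h a b => ⟨_, _, (solution h a b _ _).2 ⟨rfl, rfl⟩⟩⟩, solution⟩
  have relation : ∀ b : R, (r * p + q ^ 2 - 1) * b + (r * l + (1 - q) * k) = 0 := by
    intro b
    obtain ⟨x, y, hx, -, hb, ha⟩ := h 0 b
    rw [hsharp] at hx
    rw [hstar] at hb ha
    linear_combination -r * hx - hb + q * ha
  have h₀ := relation 0
  have h₁ := relation 1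
  exact ⟨by linear_combination h₁ - h₀, by linear_combination h₀⟩
end

section
/- Let R be a commutative ring with unit and no zero divisors, and let p, q, r, k, l ∈ R with p ≠ 0. Define binary operations on R by a*b := ra − qb + k and a#b := pa + qb + l. If the identity (a#b)#c = (a#(c*b))#(b#c) holds for all a, b, c ∈ R, then q = 0. Consequently, if in addition rp + q² = 1 and rl + (1−q)k = 0, then rp = 1 and l = −pk, so the operations are a*b = p⁻¹a + k and a#b = pa − pk. (Thus the operations of the general affine linear flat biquandle are a*b = αa + k and a#b = α⁻¹a − α⁻¹k for an invertible α.) -/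
/-- Let `R` be a commutative ring with unit and no zero divisors,
and let `p, q, r, k, l ∈ R` with `p ≠ 0`.  Define binary operations on `R` by
`a * b := r a - q b + k` and `a # b := p a + q b + l`.  If the identity
`(a # b) # c = (a # (c * b)) # (b # c)` holds for all `a, b, c ∈ R` (a labelling
condition of the third flat Reidemeister move), then `q = 0`.  Consequently, if in
addition `r p + q² = 1` and `r l + (1 - q) k = 0` (the conditions forced by the first
and second flat Reidemeister moves), then `r p = 1` and `l = -p k`, so the operations
are `a * b = p⁻¹ a + k` and `a # b = p a - p k`: the operations of the general affine
linear flat biquandle are `a * b = α a + k` and `a # b = α⁻¹ a - α⁻¹ k` for an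
invertible `α`. -/
theorem affine_third_move_forces_q_eq_zero {R : Type*} [CommRing R] [NoZeroDivisors R]
    (p q r k l : R) (hp : p ≠ 0) (star sharp : R → R → R)
    (hstar : ∀ a b : R, star a b = r * a - q * b + k)
    (hsharp : ∀ a b : R, sharp a b = p * a + q * b + l)
    (H : ∀ a b c : R, sharp (sharp a b) c = sharp (sharp a (star c b)) (sharp b c)) :
    q = 0 ∧
    (r * p + q ^ 2 = 1 → r * l + (1 - q) * k = 0 →
      (r * p = 1 ∧ l = -(p * k) ∧
        ∀ a b : R, star a b = r * a + k ∧ sharp a b = p * a - p * k)) := by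
  have hq : q = 0 := by
    have h₀ := H 0 0 0
    have h₁ := H 0 1 0
    simp only [hstar, hsharp] at h₀ h₁
    have h : p * q ^ 2 = 0 := by linear_combination h₁ - h₀
    exact pow_eq_zero_iff two_ne_zero |>.mp ((mul_eq_zero.mp h).resolve_left hp)
  refine ⟨hq, fun h₁ h₂ => ?_⟩
  subst hq
  have hrp : r * p = 1 := by linear_combination h₁
  have hl : l = -(p * k) := by linear_combination p * h₂ - l * hrp
  refine ⟨hrp, hl, fun a b => ⟨?_, ?_⟩⟩
  · rw [hstar]; ring
  · rw [hsharp, hl]; ring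
end
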